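/- Let H be a finite simple graph and let p, q ≥ 3 be integers with p + q = Δ(H) + 1. Let S ∈ F be chosen so that, among all members of F, the number of q-cliques of H[V(H) ∖ S] is minimum. Let K⁰ be a q-clique of H[V(H) ∖ S] containing a vertex v_0, let y_0 ∈ A_{v_0} ∖ {v_0} be such that (S ∪ {v_0}) ∖ {y_0} ∈ F, and let K¹ be a q-clique of H[((V(H) ∖ S) ∖ {v_0}) ∪ {y_0}] containing y_0. If K¹ ∩ (K⁰ ∖ {v_0}) ≠ ∅, then |K¹ ∩ (K⁰ ∖ {v_0})| ≥ q − 2. -/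

import Mathlib

/-- The number of `r`-cliques of `H` contained in the vertex set `W`
(i.e. the number of `r`-cliques of the induced subgraph `H[W]`). -/
noncomputable def cliqueCountOn {V : Type*} (H : SimpleGraph V) (W : Set V) (r : ℕ) : ℕ :=
  {t : Finset V | ↑t ⊆ W ∧ H.IsNClique r t}.ncard

/-- `S ∈ 𝓕`: `S` is a `K_p`-free subset of `V(H)` of maximum cardinality and, subject
to this, the number of `(p−1)`-cliques of `H[S]` is minimum. -/
def memF {V : Type*} (H : SimpleGraph V) (p : ℕ) (S : Set V) : Prop :=
  H.CliqueFreeOn S p ∧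
  (∀ W : Set V, H.CliqueFreeOn W p → W.ncard ≤ S.ncard) ∧
  (∀ W : Set V, H.CliqueFreeOn W p →
    (∀ U : Set V, H.CliqueFreeOn U p → U.ncard ≤ W.ncard) →
    cliqueCountOn H S (p - 1) ≤ cliqueCountOn H W (p - 1))

/-- `A_v`: the set of vertices `y ∈ S ∪ {v}` lying in every `p`-clique of
`H[S ∪ {v}]` that contains `v`. -/
def ASet {V : Type*} (H : SimpleGraph V) (p : ℕ) (S : Set V) (v : V) : Set V :=
  {y ∈ S ∪ {v} | ∀ t : Finset V, ↑t ⊆ S ∪ {v} → H.IsNClique p t → v ∈ t → y ∈ t}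

/-! A vertex `w ∉ S` lies in a `p`-clique of `H[S ∪ {w}]`, since `S` is a maximal `K_p`-free set,
so `w` has at least `p - 1` neighbours in `S`. If `w ∈ K₀ ∩ K₁`, then `w` is also adjacent to every
other vertex of `K₀ ∪ (K₁ \ {y₀})`, a set disjoint from `S`. Since `w` has degree at most
`p + q - 1`, that union has at most `q + 1` vertices, and inclusion–exclusion bounds
`|K₀ ∩ K₁|` from below. -/

section MaximalCliqueFreeOn

variable {V : Type*} {H : SimpleGraph V} {p : ℕ} {S : Set V} {w : V}

theorem subset_insert_neighborSet_of_isClique {s : Set V} (hs : H.IsClique s) (hw : w ∈ s) :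
    s ⊆ insert w (H.neighborSet w) :=
  fun _ hx ↦ or_iff_not_imp_left.2 fun hxw ↦ hs hw hx (Ne.symm hxw)

theorem memF.maximal_cliqueFreeOn [Finite V] (hS : memF H p S) :
    Maximal (H.CliqueFreeOn · p) S :=
  ⟨hS.1, fun W hW hSW ↦ (Set.eq_of_subset_of_ncard_le hSW (hS.2.1 W hW)).ge⟩

theorem exists_isNClique_mem_of_maximal_cliqueFreeOn (hS : Maximal (H.CliqueFreeOn · p) S)
    (hw : w ∉ S) : ∃ t : Finset V, ↑t ⊆ insert w S ∧ H.IsNClique p t ∧ w ∈ t := by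
  have hnot : ¬ H.CliqueFreeOn (insert w S) p := hS.not_prop_of_ssuperset (Set.ssubset_insert hw)
  simp only [SimpleGraph.CliqueFreeOn, not_forall, not_not] at hnot
  obtain ⟨t, htS, ht⟩ := hnot
  refine ⟨t, htS, ht, ?_⟩
  by_contra hwt
  exact hS.prop ((Set.subset_insert_iff_of_notMem hwt).1 htS) ht

theorem le_ncard_neighborSet_inter_add_one [Finite (H.neighborSet w)]
    (hS : Maximal (H.CliqueFreeOn · p) S) (hw : w ∉ S) :
    p ≤ (H.neighborSet w ∩ S).ncard + 1 := by
  obtain ⟨t, htS, ht, hwt⟩ := exists_isNClique_mem_of_maximal_cliqueFreeOn hS hw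
  have htN : (t : Set V) ⊆ insert w (H.neighborSet w ∩ S) := by
    rw [Set.insert_inter_distrib]
    exact Set.subset_inter (subset_insert_neighborSet_of_isClique ht.isClique hwt) htS
  calc
    p = (t : Set V).ncard := by rw [Set.ncard_coe_finset, ht.card_eq]
    _ ≤ (insert w (H.neighborSet w ∩ S)).ncard :=
      Set.ncard_le_ncard htN (((H.neighborSet w).toFinite.inter_of_left S).insert w)
    _ ≤ (H.neighborSet w ∩ S).ncard + 1 := Set.ncard_insert_le _ _

theorem card_le_ncard_neighborSet_sdiff_add_one [Finite (H.neighborSet w)] {K : Finset V}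
    (hKS : ↑K ⊆ Sᶜ) (hK : ↑K ⊆ insert w (H.neighborSet w)) :
    K.card ≤ (H.neighborSet w \ S).ncard + 1 := by
  have hKN : (K : Set V) ⊆ insert w (H.neighborSet w \ S) :=
    fun x hx ↦ (hK hx).imp_right fun hxN ↦ ⟨hxN, hKS hx⟩
  calc
    K.card = (K : Set V).ncard := (Set.ncard_coe_finset K).symm
    _ ≤ (insert w (H.neighborSet w \ S)).ncard :=
      Set.ncard_le_ncard hKN ((H.neighborSet w).toFinite.sdiff.insert w)
    _ ≤ (H.neighborSet w \ S).ncard + 1 := Set.ncard_insert_le _ _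

theorem add_card_le_degree_add_two [Fintype (H.neighborSet w)] {K : Finset V}
    (hS : Maximal (H.CliqueFreeOn · p) S) (hw : w ∉ S) (hKS : ↑K ⊆ Sᶜ)
    (hK : ↑K ⊆ insert w (H.neighborSet w)) : p + K.card ≤ H.degree w + 2 := by
  have hin : p ≤ (H.neighborSet w ∩ S).ncard + 1 := le_ncard_neighborSet_inter_add_one hS hw
  have hout : K.card ≤ (H.neighborSet w \ S).ncard + 1 :=
    card_le_ncard_neighborSet_sdiff_add_one hKS hK
  have hdeg : (H.neighborSet w ∩ S).ncard + (H.neighborSet w \ S).ncard = H.degree w := by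
    rw [Set.ncard_inter_add_ncard_sdiff_eq_ncard _ _ (Set.toFinite _),
      ← SimpleGraph.coe_neighborFinset, Set.ncard_coe_finset,
      SimpleGraph.card_neighborFinset_eq_degree]
  lia

theorem add_card_add_card_le_degree_add_card_inter [DecidableEq V] [Fintype (H.neighborSet w)]
    {K L : Finset V} (hS : Maximal (H.CliqueFreeOn · p) S) (hKS : ↑K ⊆ Sᶜ) (hLS : ↑L ⊆ Sᶜ)
    (hK : H.IsClique K) (hL : H.IsClique L) (hwK : w ∈ K) (hwL : w ∈ L) :
    p + (K.card + L.card) ≤ H.degree w + 2 + (K ∩ L).card := by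
  have hunion : p + (K ∪ L).card ≤ H.degree w + 2 := by
    refine add_card_le_degree_add_two hS (hKS hwK) ?_ ?_ <;> rw [Finset.coe_union]
    · exact Set.union_subset hKS hLS
    · exact Set.union_subset (subset_insert_neighborSet_of_isClique hK hwK)
        (subset_insert_neighborSet_of_isClique hL hwL)
  have hincl := Finset.card_union_add_card_inter K L
  lia

end MaximalCliqueFreeOn

theorem statement8_general {V : Type*} [DecidableEq V] {H : SimpleGraph V} [H.LocallyFinite]
    {p q : ℕ} (hdeg : ∀ v, H.degree v < p + q)
    {S : Set V} (hS : Maximal (H.CliqueFreeOn · p) S)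
    {v₀ y₀ : V} (hy₀ : y₀ ∈ S)
    {K₀ : Finset V} (hK₀ : ↑K₀ ⊆ Sᶜ) (hK₀clique : H.IsNClique q K₀)
    {K₁ : Finset V} (hK₁ : ↑K₁ ⊆ (Sᶜ \ {v₀}) ∪ {y₀}) (hK₁clique : H.IsNClique q K₁)
    (hne : (K₁ ∩ K₀.erase v₀).Nonempty) :
    q - 2 ≤ (K₁ ∩ K₀.erase v₀).card := by
  obtain ⟨w, hw⟩ := hne
  obtain ⟨hwK₁, -, hwK₀⟩ : w ∈ K₁ ∧ w ≠ v₀ ∧ w ∈ K₀ := by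
    rwa [Finset.mem_inter, Finset.mem_erase] at hw
  have hwy₀ : w ≠ y₀ := fun h ↦ hK₀ hwK₀ (h ▸ hy₀)
  have herase : ∀ x ∈ K₁.erase y₀, x ∈ Sᶜ \ {v₀} := fun x hx ↦
    (hK₁ (Finset.mem_of_mem_erase hx)).resolve_right (Finset.ne_of_mem_erase hx)
  have hinter : K₀ ∩ K₁.erase y₀ ⊆ K₁ ∩ K₀.erase v₀ := fun x hx ↦ by
    obtain ⟨hxK₀, hxK₁⟩ := Finset.mem_inter.1 hx
    exact Finset.mem_inter.2
      ⟨Finset.mem_of_mem_erase hxK₁, Finset.mem_erase.2 ⟨(herase x hxK₁).2, hxK₀⟩⟩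
  have hcount : p + (K₀.card + (K₁.erase y₀).card) ≤
      H.degree w + 2 + (K₀ ∩ K₁.erase y₀).card :=
    add_card_add_card_le_degree_add_card_inter hS hK₀ (fun x hx ↦ (herase x hx).1)
      hK₀clique.isClique (hK₁clique.isClique.subset (Finset.erase_subset y₀ K₁))
      hwK₀ (Finset.mem_erase.2 ⟨hwy₀, hwK₁⟩)
  have hcard₁ : K₁.card - 1 ≤ (K₁.erase y₀).card := Finset.pred_card_le_card_erase
  have hcard_inter := Finset.card_le_card hinter
  rw [hK₀clique.card_eq] at hcount
  rw [hK₁clique.card_eq] at hcard₁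
  have hdeg_w := hdeg w
  lia

/-- Let `p, q ≥ 3` with `p + q = Δ(H) + 1`, let `S ∈ 𝓕` minimize the number of
`q`-cliques of `H[V ∖ S]` among all members of `𝓕`. Let `K⁰` be a `q`-clique of
`H[V ∖ S]` containing `v₀`, let `y₀ ∈ A_{v₀} ∖ {v₀}` be such that
`(S ∪ {v₀}) ∖ {y₀} ∈ 𝓕`, and let `K¹` be a `q`-clique of
`H[((V ∖ S) ∖ {v₀}) ∪ {y₀}]` containing `y₀`.
If `K¹ ∩ (K⁰ ∖ {v₀}) ≠ ∅`, then `|K¹ ∩ (K⁰ ∖ {v₀})| ≥ q − 2`. -/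
theorem statement8 {V : Type*} [Fintype V] [DecidableEq V]
    (H : SimpleGraph V) [DecidableRel H.Adj]
    (p q : ℕ) (hp : 3 ≤ p) (hq : 3 ≤ q) (hpq : p + q = H.maxDegree + 1)
    (S : Set V) (hSF : memF H p S)
    (hSmin : ∀ T : Set V, memF H p T → cliqueCountOn H Sᶜ q ≤ cliqueCountOn H Tᶜ q)
    (v₀ : V)
    (K₀ : Finset V) (hK₀ : ↑K₀ ⊆ Sᶜ) (hK₀clique : H.IsNClique q K₀) (hv₀K₀ : v₀ ∈ K₀)
    (y₀ : V) (hy₀ : y₀ ∈ ASet H p S v₀ \ {v₀})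
    (hy₀F : memF H p ((S ∪ {v₀}) \ {y₀}))
    (K₁ : Finset V) (hK₁ : ↑K₁ ⊆ (Sᶜ \ {v₀}) ∪ {y₀})
    (hK₁clique : H.IsNClique q K₁) (hy₀K₁ : y₀ ∈ K₁)
    (hne : (K₁ ∩ K₀.erase v₀).Nonempty) :
    q - 2 ≤ (K₁ ∩ K₀.erase v₀).card :=
  statement8_general (fun v ↦ (H.degree_le_maxDegree v).trans_lt (by lia))
    hSF.maximal_cliqueFreeOn (hy₀.1.1.resolve_right hy₀.2) hK₀ hK₀clique hK₁ hK₁clique hne
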